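/- arXiv:2405.18534 — 5 statements merged into one kernel-verified Lean document; each statement's English description precedes it below -/
import Mathlib

section
/- Let ε₀ > 0 and Δ > 0, and let A be an adaptive selector whose candidate sets and scoring functions satisfy the Monotonicity assumption and the Bounded realized sensitivity assumption with bound Δ. Then the mechanism Repeated-EM_{ε₀,A} is ε₀-add-DP. -/
open scoped ENNReal

noncomputable section

/-- A mechanism `M` is `ε`-add-DP: for every dataset `D` and element `x`,
with `D ∪ {x}` and `D` as the neighboring pair, the probability of every outcome
set under `M (D ∪ {x})` is at most `e^ε` times that under `M D`. -/
def AddDP {X : Type*} {O : Type*} (M : Multiset X → PMF O) (ε : ℝ) : Prop :=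
  ∀ (D : Multiset X) (x : X) (S : Set O),
    (M (x ::ₘ D)).toOuterMeasure S ≤ ENNReal.ofReal (Real.exp ε) * (M D).toOuterMeasure S

/-- A mechanism `M` is (two-sided) `ε`-DP with respect to add-remove neighbors. -/
def PureDP {X : Type*} {O : Type*} (M : Multiset X → PMF O) (ε : ℝ) : Prop :=
  ∀ (D : Multiset X) (x : X) (S : Set O),
    (M (x ::ₘ D)).toOuterMeasure S ≤ ENNReal.ofReal (Real.exp ε) * (M D).toOuterMeasure S ∧
    (M D).toOuterMeasure S ≤ ENNReal.ofReal (Real.exp ε) * (M (x ::ₘ D)).toOuterMeasure S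

open Classical in
/-- The exponential mechanism over a finite nonempty candidate set `Cs`, outputting each
`c ∈ Cs` with probability proportional to `exp (lam * q c)`. -/
def expMech {C : Type*} (lam : ℝ) (Cs : Finset C) (hCs : Cs.Nonempty) (q : C → ℝ) : PMF C :=
  PMF.ofFinset
    (fun c => if c ∈ Cs then ENNReal.ofReal (Real.exp (lam * q c)) /
        (∑ c' ∈ Cs, ENNReal.ofReal (Real.exp (lam * q c'))) else 0)
    Cs
    (by
      obtain ⟨c₀, hc₀⟩ := hCs
      set Z : ℝ≥0∞ := ∑ c' ∈ Cs, ENNReal.ofReal (Real.exp (lam * q c')) with hZ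
      have hZ0 : Z ≠ 0 := by
        intro h
        have h0 := (Finset.sum_eq_zero_iff.mp h) c₀ hc₀
        rw [ENNReal.ofReal_eq_zero] at h0
        exact absurd h0 (not_le.mpr (Real.exp_pos _))
      have hZtop : Z ≠ ⊤ := by
        rw [hZ]
        exact (ENNReal.sum_lt_top.mpr (fun c _ => ENNReal.ofReal_lt_top)).ne
      calc (∑ c ∈ Cs, if c ∈ Cs then ENNReal.ofReal (Real.exp (lam * q c)) / Z else 0)
          = ∑ c ∈ Cs, ENNReal.ofReal (Real.exp (lam * q c)) / Z :=
            Finset.sum_congr rfl (fun c hc => if_pos hc)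
        _ = Z * Z⁻¹ := by
            rw [hZ]
            simp only [div_eq_mul_inv, ← Finset.sum_mul]
        _ = 1 := ENNReal.mul_inv_cancel hZ0 hZtop)
    (fun c hc => if_neg hc)

/-- The `Repeated-EM` mechanism: starting from the history `hist`, in each of the remaining
`L` rounds the adaptive selector `A` chooses a (nonempty) candidate set and a scoring function
from the history, and the next output is sampled from the exponential mechanism with
parameter `lam` on the current dataset's scores. -/
def repeatedEM {X C : Type*} (lam : ℝ) (A : List C → Finset C × (C → Multiset X → ℝ))
    (hA : ∀ h, (A h).1.Nonempty) : ℕ → Multiset X → List C → PMF (List C)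
  | 0, _, hist => PMF.pure hist
  | (L + 1), D, hist =>
      (expMech lam (A hist).1 (hA hist) (fun c => (A hist).2 c D)).bind
        (fun c => repeatedEM lam A hA L D (hist ++ [c]))

/-- Monotonicity assumption: for every history and candidate, adding an element to the
dataset does not decrease the score. -/
def EMMonotone {X C : Type*} (A : List C → Finset C × (C → Multiset X → ℝ)) : Prop :=
  ∀ (h : List C) (c : C) (x : X) (D : Multiset X), (A h).2 c D ≤ (A h).2 c (x ::ₘ D)

/-- Bounded realized sensitivity assumption: for every pair of add-remove neighboring
datasets and every possible output sequence, the realized score differences sum to at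
most `Δ`. -/
def EMBoundedSens {X C : Type*} (A : List C → Finset C × (C → Multiset X → ℝ))
    (Δ : ℝ) (L : ℕ) : Prop :=
  ∀ (D : Multiset X) (x : X) (out : Fin L → C),
    (∀ i : Fin L, out i ∈ (A ((List.ofFn out).take i.val)).1) →
    ∑ i : Fin L,
      |(A ((List.ofFn out).take i.val)).2 (out i) (x ::ₘ D) -
        (A ((List.ofFn out).take i.val)).2 (out i) D| ≤ Δ

/-!
When every score rises from `q` to `q'`, so does the normalizing constant of the exponential
mechanism; hence the probability of `c` grows by a factor of at most `exp (lam * (q' c - q c))`,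
half the exponent that a two-sided bound would pay. Along an output sequence these factors
multiply to `exp (lam * s)`, where `s` is the realized sensitivity of that sequence. The induction
over rounds therefore runs with a privacy budget which depends on the history: choosing `c` leaves
the remaining rounds the budget minus the score difference of `c`.
-/

section Composition

variable {α β : Type*} {p q : PMF α} {f g : α → PMF β} {u v : α → ℝ≥0∞} {K : ℝ≥0∞} {S : Set β}

theorem toOuterMeasure_bind_le_mul (hpq : ∀ a, p a ≤ u a * q a)
    (hfg : ∀ a ∈ q.support, (f a).toOuterMeasure S ≤ v a * (g a).toOuterMeasure S)
    (huv : ∀ a ∈ q.support, u a * v a ≤ K) :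
    (p.bind f).toOuterMeasure S ≤ K * (q.bind g).toOuterMeasure S := by
  rw [PMF.toOuterMeasure_bind_apply, PMF.toOuterMeasure_bind_apply, ← ENNReal.tsum_mul_left]
  refine ENNReal.tsum_le_tsum fun a => ?_
  by_cases ha : a ∈ q.support
  · calc p a * (f a).toOuterMeasure S
        ≤ u a * q a * (v a * (g a).toOuterMeasure S) := mul_le_mul' (hpq a) (hfg a ha)
      _ = u a * v a * (q a * (g a).toOuterMeasure S) := by ring
      _ ≤ K * (q a * (g a).toOuterMeasure S) := by gcongr; exact huv a ha
  · have hqa : q a = 0 := (q.apply_eq_zero_iff a).2 ha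
    have hpa : p a = 0 := by simpa [hqa] using hpq a
    simp [hpa]

end Composition

section ExpMech

variable {C : Type*} {lam : ℝ} {Cs : Finset C} {hCs : Cs.Nonempty} {q q' : C → ℝ}

theorem support_expMech_subset : (expMech lam Cs hCs q).support ⊆ Cs := fun _ hc =>
  ((PMF.mem_support_ofFinset_iff _ _ _).1 hc).1

theorem expMech_le_exp_mul_of_le (hlam : 0 ≤ lam) (hq : ∀ c ∈ Cs, q c ≤ q' c) (c : C) :
    expMech lam Cs hCs q' c ≤
      ENNReal.ofReal (Real.exp (lam * (q' c - q c))) * expMech lam Cs hCs q c := by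
  simp only [expMech, PMF.ofFinset_apply]
  split_ifs
  · have numerator_eq : ENNReal.ofReal (Real.exp (lam * q' c)) =
        ENNReal.ofReal (Real.exp (lam * (q' c - q c))) * ENNReal.ofReal (Real.exp (lam * q c)) := by
      rw [← ENNReal.ofReal_mul (Real.exp_nonneg _), ← Real.exp_add]
      ring_nf
    have normalizer_le : ∑ c ∈ Cs, ENNReal.ofReal (Real.exp (lam * q c)) ≤
        ∑ c ∈ Cs, ENNReal.ofReal (Real.exp (lam * q' c)) := by
      gcongr with c hc
      exact hq c hc
    rw [numerator_eq, ← mul_div_assoc]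
    exact ENNReal.div_le_div_left normalizer_le _
  · simp

end ExpMech

section RepeatedEM

variable {X C : Type*} {A : List C → Finset C × (C → Multiset X → ℝ)} {D D' : Multiset X}
  {h : List C} {L : ℕ}

/-- The output sequences `out` that the selector `A` allows after the history `h`: each output
belongs to the candidate set of its round. -/
def IsPossibleOutput (A : List C → Finset C × (C → Multiset X → ℝ)) (h : List C)
    (out : Fin L → C) : Prop :=
  ∀ i : Fin L, out i ∈ (A (h ++ (List.ofFn out).take i)).1

/-- The realized sensitivity of the output sequence `out` after the history `h`, for the datasets
`D` and `D'`: the sum over the rounds of `|q_i(c*_i; D') - q_i(c*_i; D)|`. -/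
def realizedSensitivity (A : List C → Finset C × (C → Multiset X → ℝ)) (D D' : Multiset X)
    (h : List C) (out : Fin L → C) : ℝ :=
  ∑ i : Fin L, |(A (h ++ (List.ofFn out).take i)).2 (out i) D' -
    (A (h ++ (List.ofFn out).take i)).2 (out i) D|

theorem isPossibleOutput_cons {c : C} {out : Fin L → C} :
    IsPossibleOutput A h (Fin.cons c out : Fin (L + 1) → C) ↔
      c ∈ (A h).1 ∧ IsPossibleOutput A (h ++ [c]) out := by
  simp [IsPossibleOutput, Fin.forall_fin_succ, List.ofFn_succ]

theorem realizedSensitivity_cons (c : C) (out : Fin L → C) :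
    realizedSensitivity A D D' h (Fin.cons c out : Fin (L + 1) → C) =
      |(A h).2 c D' - (A h).2 c D| + realizedSensitivity A D D' (h ++ [c]) out := by
  simp [realizedSensitivity, Fin.sum_univ_succ, List.ofFn_succ]

theorem toOuterMeasure_repeatedEM_le_exp_mul {lam B : ℝ} {hA : ∀ h, (A h).1.Nonempty}
    (hlam : 0 ≤ lam) (hmono : ∀ t, ∀ c ∈ (A t).1, (A t).2 c D ≤ (A t).2 c D')
    (hB : ∀ out : Fin L → C, IsPossibleOutput A h out → realizedSensitivity A D D' h out ≤ B)
    (S : Set (List C)) :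
    (repeatedEM lam A hA L D' h).toOuterMeasure S ≤
      ENNReal.ofReal (Real.exp (lam * B)) * (repeatedEM lam A hA L D h).toOuterMeasure S := by
  induction L generalizing h B with
  | zero =>
    have B_nonneg : 0 ≤ B := by
      simpa [realizedSensitivity] using hB Fin.elim0 fun i => i.elim0
    refine le_mul_of_one_le_left zero_le ?_
    exact ENNReal.one_le_ofReal.2 (Real.one_le_exp (mul_nonneg hlam B_nonneg))
  | succ L ih =>
    let loss (c : C) : ℝ := |(A h).2 c D' - (A h).2 c D|
    have remaining_le (c : C) (hc : c ∈ (A h).1) (out : Fin L → C)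
        (hout : IsPossibleOutput A (h ++ [c]) out) :
        realizedSensitivity A D D' (h ++ [c]) out ≤ B - loss c := by
      have total_le := hB (Fin.cons c out) (isPossibleOutput_cons.2 ⟨hc, hout⟩)
      rw [realizedSensitivity_cons] at total_le
      exact le_sub_iff_add_le'.2 total_le
    refine toOuterMeasure_bind_le_mul (expMech_le_exp_mul_of_le hlam (hmono h))
      (fun c hc => ih (remaining_le c (support_expMech_subset hc))) fun c _ => ?_
    rw [← ENNReal.ofReal_mul (Real.exp_nonneg _), ← Real.exp_add, ← mul_add]
    gcongr
    linarith [le_abs_self ((A h).2 c D' - (A h).2 c D)]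

end RepeatedEM

/-- under monotonicity and bounded realized sensitivity (with bound `Δ`),
`Repeated-EM` with exponential-mechanism parameter `ε₀ / Δ` is `ε₀`-add-DP. -/
theorem stmt2 {X C : Type*} (ε₀ Δ : ℝ) (hε₀ : 0 < ε₀) (hΔ : 0 < Δ) (L : ℕ)
    (A : List C → Finset C × (C → Multiset X → ℝ)) (hA : ∀ h, (A h).1.Nonempty)
    (hmono : EMMonotone A) (hsens : EMBoundedSens A Δ L) :
    AddDP (fun D => repeatedEM (ε₀ / Δ) A hA L D []) ε₀ := by
  intro D x S
  have hle := toOuterMeasure_repeatedEM_le_exp_mul (h := []) (hA := hA) (div_nonneg hε₀.le hΔ.le)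
    (fun h c _ => hmono h c x D) (hsens D x) S
  rwa [div_mul_cancel₀ ε₀ hΔ.ne'] at hle
end
end

section
/- There are universal constants C₁, C₂ > 0 such that for any 0 < ε, β < 1, any q ∈ {1, 2}, any finite metric space ([m], d) of diameter at most 1, and any k ≤ m, there exists an ε-DP algorithm that, on any input dataset D of n points of [m], outputs a set S ⊆ [m] with |S| = k satisfying, with probability at least 1 − β, cost^q(S; D) ≤ C₁·OPT^q_k(D) + C₂·k·log(m·n/β)/ε. -/
open scoped ENNReal

noncomputable section

/-- A finite metric space on `[m]` with diameter at most `1`. -/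
structure FinMetric (m : ℕ) where
  d : Fin m → Fin m → ℝ
  nonneg : ∀ a b, 0 ≤ d a b
  refl : ∀ a, d a a = 0
  eq_of_d_eq_zero : ∀ a b, d a b = 0 → a = b
  symm : ∀ a b, d a b = d b a
  triangle : ∀ a b c, d a c ≤ d a b + d b c
  diam_le_one : ∀ a b, d a b ≤ 1

/-- The `(·)^q` clustering cost `cost^q(S; D) = ∑_{x ∈ D} min_{c ∈ S} d(c, x)^q`
(with the convention that the per-point cost is `1` when `S = ∅`). -/
noncomputable def costq {m : ℕ} (Met : FinMetric m) (q : ℕ) (S : Finset (Fin m))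
    (D : Multiset (Fin m)) : ℝ :=
  (D.map fun x => if h : S.Nonempty then S.inf' h (fun c => Met.d c x ^ q) else 1).sum

/-! The exponential mechanism on the `k`-subsets already achieves `C₁ = C₂ = 1`. Adding a point to
the dataset moves every total loss up by at most `1`, so all Gibbs weights shrink by a factor in
`[e^{-ε}, 1]`. The normalizing constant shrinks by such a factor too, so the ratio changes by at
most `e^ε` and the mechanism is `ε`-DP without the usual loss of a factor `2`. A candidate that is
worse than the optimum by `α` has probability at most `e^{-εα}`, and there are at most `m ^ k`
candidates. -/

section PMF

variable {O : Type*}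

lemma toOuterMeasure_le_mul {p r : PMF O} {c : ℝ≥0∞} (h : ∀ s, p s ≤ c * r s) (A : Set O) :
    p.toOuterMeasure A ≤ c * r.toOuterMeasure A := by
  rw [PMF.toOuterMeasure_apply, PMF.toOuterMeasure_apply, ← ENNReal.tsum_mul_left]
  refine ENNReal.tsum_le_tsum fun s => ?_
  rw [← Set.indicator_const_mul]
  exact Set.indicator_le_indicator (h s)

lemma normalize_apply_le_mul {v w : O → ℝ≥0∞} (hv₀ : tsum v ≠ 0) (hv : tsum v ≠ ⊤)
    (hw₀ : tsum w ≠ 0) (hw : tsum w ≠ ⊤) {a b : ℝ≥0∞} (hvw : ∀ s, v s ≤ a * w s)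
    (hwv : ∀ s, w s ≤ b * v s) (s : O) :
    PMF.normalize v hv₀ hv s ≤ a * b * PMF.normalize w hw₀ hw s := by
  have hsum : tsum w ≤ b * tsum v := by
    rw [← ENNReal.tsum_mul_left]
    exact ENNReal.tsum_le_tsum hwv
  have hinv : (tsum v)⁻¹ ≤ b * (tsum w)⁻¹ := by
    rw [← div_eq_mul_inv, ENNReal.le_div_iff_mul_le (.inl hw₀) (.inl hw), mul_comm,
      ← div_eq_mul_inv]
    exact ENNReal.div_le_of_le_mul hsum
  calc v s * (tsum v)⁻¹ ≤ a * w s * (b * (tsum w)⁻¹) := mul_le_mul' (hvw s) hinv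
    _ = a * b * (w s * (tsum w)⁻¹) := by ring

end PMF

section Gibbs

variable {O : Type*} (𝒮 : Finset O) (f g : O → ℝ)

/-- The unnormalized Gibbs weight `e^{-f s}` of a candidate `s ∈ 𝒮` with energy `f s`; elements
outside `𝒮` get weight `0`. -/
def gibbsWeight (s : O) : ℝ≥0∞ :=
  (𝒮 : Set O).indicator (fun s => ENNReal.ofReal (Real.exp (-f s))) s

variable {𝒮 f g}

lemma gibbsWeight_of_mem {s : O} (hs : s ∈ 𝒮) :
    gibbsWeight 𝒮 f s = ENNReal.ofReal (Real.exp (-f s)) :=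
  Set.indicator_of_mem (Finset.mem_coe.2 hs) _

lemma gibbsWeight_of_notMem {s : O} (hs : s ∉ 𝒮) : gibbsWeight 𝒮 f s = 0 :=
  Set.indicator_of_notMem (mt Finset.mem_coe.1 hs) _

lemma gibbsWeight_le_exp_mul {s t : O} {a : ℝ} (hs : s ∈ 𝒮) (ht : t ∈ 𝒮)
    (h : g t ≤ f s + a) :
    gibbsWeight 𝒮 f s ≤ ENNReal.ofReal (Real.exp a) * gibbsWeight 𝒮 g t := by
  rw [gibbsWeight_of_mem hs, gibbsWeight_of_mem ht, ← ENNReal.ofReal_mul (Real.exp_pos a).le,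
    ← Real.exp_add]
  exact ENNReal.ofReal_le_ofReal (Real.exp_le_exp.2 (by linarith))

variable (𝒮 f) in
lemma tsum_gibbsWeight_ne_top : ∑' s, gibbsWeight 𝒮 f s ≠ ⊤ := by
  rw [tsum_eq_sum fun s hs => gibbsWeight_of_notMem hs]
  refine ENNReal.sum_ne_top.2 fun s hs => ?_
  rw [gibbsWeight_of_mem hs]
  exact ENNReal.ofReal_ne_top

variable (f) in
lemma tsum_gibbsWeight_ne_zero (h𝒮 : 𝒮.Nonempty) : ∑' s, gibbsWeight 𝒮 f s ≠ 0 := by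
  obtain ⟨s, hs⟩ := h𝒮
  refine fun h => (ENNReal.ofReal_pos.2 (Real.exp_pos (-f s))).ne' ?_
  rw [← gibbsWeight_of_mem hs]
  exact ENNReal.tsum_eq_zero.1 h s

variable (f) in
/-- The Gibbs distribution on the finite nonempty set `𝒮`, in which `s ∈ 𝒮` has probability
proportional to `e^{-f s}`. -/
def gibbsPMF (h𝒮 : 𝒮.Nonempty) : PMF O :=
  PMF.normalize (gibbsWeight 𝒮 f) (tsum_gibbsWeight_ne_zero f h𝒮) (tsum_gibbsWeight_ne_top 𝒮 f)

variable (h𝒮 : 𝒮.Nonempty)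

lemma gibbsPMF_of_notMem {s : O} (hs : s ∉ 𝒮) : gibbsPMF f h𝒮 s = 0 := by
  rw [gibbsPMF, PMF.normalize_apply, gibbsWeight_of_notMem hs, zero_mul]

variable (f) in
lemma sum_gibbsPMF : ∑ s ∈ 𝒮, gibbsPMF f h𝒮 s = 1 := by
  rw [← PMF.tsum_coe (gibbsPMF f h𝒮), tsum_eq_sum fun s hs => gibbsPMF_of_notMem h𝒮 hs]

lemma toOuterMeasure_gibbsPMF_le {a b : ℝ} (hgf : ∀ s ∈ 𝒮, g s ≤ f s + a)
    (hfg : ∀ s ∈ 𝒮, f s ≤ g s + b) (A : Set O) :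
    (gibbsPMF f h𝒮).toOuterMeasure A ≤
      ENNReal.ofReal (Real.exp (a + b)) * (gibbsPMF g h𝒮).toOuterMeasure A := by
  have weight_le {f g : O → ℝ} {a : ℝ} (h : ∀ s ∈ 𝒮, g s ≤ f s + a) (s : O) :
      gibbsWeight 𝒮 f s ≤ ENNReal.ofReal (Real.exp a) * gibbsWeight 𝒮 g s := by
    by_cases hs : s ∈ 𝒮
    · exact gibbsWeight_le_exp_mul hs hs (h s hs)
    · simp only [gibbsWeight_of_notMem hs, mul_zero, le_refl]
  rw [Real.exp_add, ENNReal.ofReal_mul (Real.exp_pos a).le]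
  exact toOuterMeasure_le_mul
    (normalize_apply_le_mul _ _ _ _ (weight_le hgf) (weight_le hfg)) A

lemma gibbsPMF_le_exp_neg {s t : O} {a : ℝ} (hs : s ∈ 𝒮) (ht : t ∈ 𝒮) (h : f t + a ≤ f s) :
    gibbsPMF f h𝒮 s ≤ ENNReal.ofReal (Real.exp (-a)) := by
  rw [gibbsPMF, PMF.normalize_apply, ← div_eq_mul_inv]
  refine ENNReal.div_le_of_le_mul ?_
  calc gibbsWeight 𝒮 f s ≤ ENNReal.ofReal (Real.exp (-a)) * gibbsWeight 𝒮 f t :=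
        gibbsWeight_le_exp_mul hs ht (by linarith)
    _ ≤ ENNReal.ofReal (Real.exp (-a)) * ∑' t, gibbsWeight 𝒮 f t := by
        gcongr
        exact ENNReal.le_tsum t

lemma one_sub_le_toOuterMeasure_gibbsPMF {a β : ℝ} (hβ : (𝒮.card : ℝ) * Real.exp (-a) ≤ β) :
    ENNReal.ofReal (1 - β) ≤
      (gibbsPMF f h𝒮).toOuterMeasure {s | s ∈ 𝒮 ∧ ∀ t ∈ 𝒮, f s ≤ f t + a} := by
  classical
  set good : O → Prop := fun s => ∀ t ∈ 𝒮, f s ≤ f t + a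
  have hbad : ∑ s ∈ 𝒮 with ¬good s, gibbsPMF f h𝒮 s ≤ ENNReal.ofReal β := by
    have hpoint : ∀ s ∈ 𝒮.filter (¬good ·),
        gibbsPMF f h𝒮 s ≤ ENNReal.ofReal (Real.exp (-a)) := fun s hs => by
      obtain ⟨hs, hs_bad⟩ := Finset.mem_filter.1 hs
      obtain ⟨t, ht, hlt⟩ : ∃ t ∈ 𝒮, f t + a < f s := by simpa [good] using hs_bad
      exact gibbsPMF_le_exp_neg h𝒮 hs ht hlt.le
    calc ∑ s ∈ 𝒮 with ¬good s, gibbsPMF f h𝒮 s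
        ≤ (𝒮.filter (¬good ·)).card • ENNReal.ofReal (Real.exp (-a)) :=
          Finset.sum_le_card_nsmul _ _ _ hpoint
      _ ≤ 𝒮.card • ENNReal.ofReal (Real.exp (-a)) :=
          nsmul_le_nsmul_left zero_le (Finset.card_filter_le _ _)
      _ = ENNReal.ofReal (𝒮.card * Real.exp (-a)) := by
          rw [← nsmul_eq_mul, ENNReal.ofReal_nsmul]
      _ ≤ ENNReal.ofReal β := ENNReal.ofReal_le_ofReal hβ
  have hβ₀ : 0 ≤ β := hβ.trans' (by positivity)
  rw [ENNReal.ofReal_sub _ hβ₀, ENNReal.ofReal_one, tsub_le_iff_right, ← Finset.coe_filter,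
    PMF.toOuterMeasure_apply_finset, ← sum_gibbsPMF f h𝒮,
    ← Finset.sum_filter_add_sum_filter_not 𝒮 good]
  gcongr

end Gibbs

section ExponentialMechanism

variable {X O : Type*} {𝒮 : Finset O} (h𝒮 : 𝒮.Nonempty) {ℓ : O → X → ℝ} {ε : ℝ}

variable (ℓ ε) in
/-- The exponential mechanism for minimizing the total loss `∑ x ∈ D, ℓ s x` over `s ∈ 𝒮`, which
outputs `s` with probability proportional to `exp (-ε * ∑ x ∈ D, ℓ s x)`. The exponent uses
`ε` rather than the customary `ε / 2`. -/
def exponentialMechanism (D : Multiset X) : PMF O :=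
  gibbsPMF (fun s => ε * (D.map (ℓ s)).sum) h𝒮

lemma pureDP_exponentialMechanism (hℓ : ∀ s ∈ 𝒮, ∀ x, ℓ s x ∈ Set.Icc 0 1) (hε : 0 ≤ ε) :
    PureDP (exponentialMechanism h𝒮 ℓ ε) ε := by
  intro D x A
  have le_cons : ∀ s ∈ 𝒮, ε * (D.map (ℓ s)).sum ≤ ε * ((x ::ₘ D).map (ℓ s)).sum + 0 := by
    intro s hs
    rw [Multiset.map_cons, Multiset.sum_cons]
    nlinarith [mul_nonneg hε (hℓ s hs x).1]
  have cons_le : ∀ s ∈ 𝒮, ε * ((x ::ₘ D).map (ℓ s)).sum ≤ ε * (D.map (ℓ s)).sum + ε := by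
    intro s hs
    rw [Multiset.map_cons, Multiset.sum_cons]
    nlinarith [mul_le_of_le_one_right hε (hℓ s hs x).2]
  constructor
  · simpa only [exponentialMechanism, zero_add] using
      toOuterMeasure_gibbsPMF_le h𝒮 le_cons cons_le A
  · simpa only [exponentialMechanism, add_zero] using
      toOuterMeasure_gibbsPMF_le h𝒮 cons_le le_cons A

lemma one_sub_le_toOuterMeasure_exponentialMechanism (hε : 0 < ε) {a β : ℝ}
    (hβ : (𝒮.card : ℝ) * Real.exp (-a) ≤ β) (D : Multiset X) :
    ENNReal.ofReal (1 - β) ≤ (exponentialMechanism h𝒮 ℓ ε D).toOuterMeasure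
      {s | s ∈ 𝒮 ∧ ∀ t ∈ 𝒮, (D.map (ℓ s)).sum ≤ (D.map (ℓ t)).sum + a / ε} := by
  have hdiv (u v : ℝ) : ε * u ≤ ε * v + a ↔ u ≤ v + a / ε := by
    rw [← mul_le_mul_iff_right₀ hε (b := u), mul_add, mul_div_cancel₀ a hε.ne']
  simpa only [exponentialMechanism, hdiv] using
    one_sub_le_toOuterMeasure_gibbsPMF (f := fun s => ε * (D.map (ℓ s)).sum) h𝒮 hβ

variable (ℓ ε) in
lemma toOuterMeasure_exponentialMechanism_eq_one {A : Set O} (hA : ∀ s ∈ 𝒮, s ∈ A)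
    (D : Multiset X) : (exponentialMechanism h𝒮 ℓ ε D).toOuterMeasure A = 1 := by
  refine (PMF.toOuterMeasure_apply_eq_one_iff _ _).2 fun s hs => hA s ?_
  by_contra hs𝒮
  exact hs (gibbsPMF_of_notMem h𝒮 hs𝒮)

end ExponentialMechanism

section SubsetSelection

lemma choose_mul_exp_neg_log_le {m n k : ℕ} {β : ℝ} (hm : m ≠ 0) (hn : n ≠ 0) (hk : k ≠ 0)
    (hβ : 0 < β) (hβ₁ : β ≤ 1) :
    (m.choose k : ℝ) * Real.exp (-(k * Real.log (m * n / β))) ≤ β := by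
  have : (0 : ℝ) < m := by exact_mod_cast Nat.pos_of_ne_zero hm
  have hn' : (1 : ℝ) ≤ n := by exact_mod_cast Nat.one_le_iff_ne_zero.2 hn
  have hexp : Real.exp (-(k * Real.log (m * n / β))) = (β / (m * n)) ^ k := by
    rw [← mul_neg, ← Real.log_inv, inv_div, Real.exp_nat_mul, Real.exp_log (by positivity)]
  have hdiv : β / n ≤ β := div_le_self hβ.le hn'
  calc (m.choose k : ℝ) * Real.exp (-(k * Real.log (m * n / β)))
      ≤ (m : ℝ) ^ k * (β / (m * n)) ^ k := by
        rw [hexp]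
        gcongr
        exact_mod_cast Nat.choose_le_pow m k
    _ = (β / n) ^ k := by
        rw [← mul_pow]
        field_simp
    _ ≤ β / n := pow_le_of_le_one (by positivity) (hdiv.trans hβ₁) hk
    _ ≤ β := hdiv

theorem stmt7_general {X C : Type*} [Fintype C] {ℓ : Finset C → X → ℝ}
    (hℓ : ∀ S x, ℓ S x ∈ Set.Icc 0 1) {ε β : ℝ} (hε : 0 < ε) (hβ : 0 < β) (hβ₁ : β ≤ 1)
    {k : ℕ} (hk : k ≤ Fintype.card C) :
    ∃ M : Multiset X → PMF (Finset C), PureDP M ε ∧ ∀ D : Multiset X,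
      ENNReal.ofReal (1 - β) ≤ (M D).toOuterMeasure
        {S | S.card = k ∧ ∀ T : Finset C, T.card = k →
          (D.map (ℓ S)).sum ≤
            (D.map (ℓ T)).sum + k * Real.log (Fintype.card C * D.card / β) / ε} := by
  have h𝒮 : (Finset.powersetCard k (Finset.univ : Finset C)).Nonempty :=
    Finset.powersetCard_nonempty.2 hk
  refine ⟨exponentialMechanism h𝒮 ℓ ε,
    pureDP_exponentialMechanism h𝒮 (fun S _ => hℓ S) hε.le, fun D => ?_⟩
  by_cases hdeg : k = 0 ∨ D = 0
  -- The error term vanishes (for `D = 0` because `Real.log 0 = 0`), but all outputs are optimal.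
  · rw [toOuterMeasure_exponentialMechanism_eq_one, ENNReal.ofReal_le_one]
    · linarith
    · intro S hS
      have hS_card : S.card = k := Finset.mem_powersetCard_univ.1 hS
      refine ⟨hS_card, fun T hT => ?_⟩
      rcases hdeg with rfl | rfl
      · simp [Finset.card_eq_zero.1 hS_card, Finset.card_eq_zero.1 hT]
      · simp
  · obtain ⟨hk₀, hD⟩ := not_or.1 hdeg
    have hC : Fintype.card C ≠ 0 := by omega
    have hcard : ((Finset.powersetCard k (Finset.univ : Finset C)).card : ℝ) *
        Real.exp (-(k * Real.log (Fintype.card C * D.card / β))) ≤ β := by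
      rw [Finset.card_powersetCard, Finset.card_univ]
      exact choose_mul_exp_neg_log_le hC (mt Multiset.card_eq_zero.1 hD) hk₀ hβ hβ₁
    simpa only [Finset.mem_powersetCard_univ] using
      one_sub_le_toOuterMeasure_exponentialMechanism h𝒮 hε hcard D

end SubsetSelection

section Clustering

/-- The cost `min_{c ∈ S} d(c, x)^q` of serving a single point `x` from the centers `S`, with the
convention of `costq` for `S = ∅`. -/
def pointCost {m : ℕ} (Met : FinMetric m) (q : ℕ) (S : Finset (Fin m)) (x : Fin m) : ℝ :=
  if h : S.Nonempty then S.inf' h (fun c => Met.d c x ^ q) else 1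

lemma pointCost_mem_Icc {m : ℕ} (Met : FinMetric m) (q : ℕ) (S : Finset (Fin m)) (x : Fin m) :
    pointCost Met q S x ∈ Set.Icc 0 1 := by
  unfold pointCost
  split_ifs with hS
  · obtain ⟨c, -, heq⟩ := S.exists_mem_eq_inf' hS fun c => Met.d c x ^ q
    rw [heq]
    exact ⟨pow_nonneg (Met.nonneg c x) q, pow_le_one₀ (Met.nonneg c x) (Met.diam_le_one c x)⟩
  · exact ⟨zero_le_one, le_rfl⟩

lemma costq_eq_sum_pointCost {m : ℕ} (Met : FinMetric m) (q : ℕ) (S : Finset (Fin m))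
    (D : Multiset (Fin m)) : costq Met q S D = (D.map (pointCost Met q S)).sum :=
  rfl

end Clustering

/-- a pure-DP `O(1)`-approximation for metric `k`-median (`q = 1`) and
`k`-means (`q = 2`) with error `O(k log(mn/β)/ε)`, where `n = |D|`. -/
theorem stmt7 :
    ∃ C₁ C₂ : ℝ, 0 < C₁ ∧ 0 < C₂ ∧
      ∀ (ε β : ℝ), 0 < ε → ε < 1 → 0 < β → β < 1 →
      ∀ q : ℕ, (q = 1 ∨ q = 2) →
      ∀ (m : ℕ) (Met : FinMetric m) (k : ℕ), k ≤ m →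
      ∃ M : Multiset (Fin m) → PMF (Finset (Fin m)),
        PureDP M ε ∧
        ∀ D : Multiset (Fin m),
          ENNReal.ofReal (1 - β) ≤
            (M D).toOuterMeasure
              {S : Finset (Fin m) | S.card = k ∧
                ∀ T : Finset (Fin m), T.card = k →
                  costq Met q S D ≤
                    C₁ * costq Met q T D +
                      C₂ * k * Real.log (m * D.card / β) / ε} := by
  refine ⟨1, 1, one_pos, one_pos, fun ε β hε _ hβ hβ₁ q _ m Met k hk => ?_⟩
  simpa only [costq_eq_sum_pointCost, one_mul, Fintype.card_fin] using
    stmt7_general (pointCost_mem_Icc Met q) hε hβ hβ₁.le (hk.trans_eq (Fintype.card_fin m).symm)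
end
end

section
/- Let ε > 0 and Δ > 0, and let A be an adaptive selector whose query functions and thresholds satisfy the Monotonicity assumption and the Bounded realized sensitivity assumption with bound Δ. Then the subsampled mechanism Repeated-AT_{ln(2),A}^{S_p} is ε-DP for p = 1 − e^{−ε}. -/
open scoped ENNReal

noncomputable section

/-- Poisson subsampling of a list: each element is kept independently with probability `p`. -/
def subsampleList {X : Type*} (p : ℝ≥0∞) (hp : p ≤ 1) : List X → PMF (Multiset X)
  | [] => PMF.pure 0
  | x :: xs =>
      (PMF.bernoulli p.toNNReal (ENNReal.toNNReal_mono ENNReal.one_ne_top hp)).bind fun b =>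
        (subsampleList p hp xs).bind fun s => PMF.pure (if b then x ::ₘ s else s)

/-- The Poisson subsampling operator `S_p` on a dataset (finite multiset): each element is
kept independently with probability `p`. -/
def subsample {X : Type*} (p : ℝ≥0∞) (hp : p ≤ 1) (D : Multiset X) : PMF (Multiset X) :=
  subsampleList p hp D.toList

/-- The subsampled mechanism `M^{S_p}`, mapping `D ↦ M (S_p D)`. -/
def subsampledMech {X : Type*} {O : Type*} (M : Multiset X → PMF O) (p : ℝ) (hp : p ≤ 1)
    (D : Multiset X) : PMF O :=
  (subsample (ENNReal.ofReal p) (ENNReal.ofReal_le_one.mpr hp) D).bind M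

/-- The `Repeated-AT` mechanism: starting from history `hist`, in each of the remaining `L`
rounds the adaptive selector `A` chooses, from the history, a query `h` on datasets and a
threshold `τ`; exponential noise `θ ~ Exp(lam)` is added to the query value and the round
outputs `⊤` (i.e. `true`) iff `h D + θ > τ`.  (Since `θ ~ Exp(lam)` is continuous,
`Pr[h D + θ > τ] = exp (-(lam * max (τ - h D) 0))`, so the round is a Bernoulli draw with
that success probability.) -/
def repeatedAT {X : Type*} (lam : ℝ) (hlam : 0 ≤ lam)
    (A : List Bool → (Multiset X → ℝ) × ℝ) :
    ℕ → Multiset X → List Bool → PMF (List Bool)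
  | 0, _, hist => PMF.pure hist
  | (L + 1), D, hist =>
      (PMF.bernoulli (Real.toNNReal (Real.exp (-(lam * max ((A hist).2 - (A hist).1 D) 0))))
        (by
          apply Real.toNNReal_le_one.mpr
          rw [← Real.exp_zero]
          exact Real.exp_le_exp.mpr (neg_nonpos.mpr
            (mul_nonneg hlam (le_max_right _ _))))).bind
        (fun b => repeatedAT lam hlam A L D (hist ++ [b]))

/-- Monotonicity assumption: for every history, adding an element to the dataset does not
decrease the query value. -/
def ATMonotone {X : Type*} (A : List Bool → (Multiset X → ℝ) × ℝ) : Prop :=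
  ∀ (h : List Bool) (x : X) (D : Multiset X), (A h).1 D ≤ (A h).1 (x ::ₘ D)

/-- Bounded realized sensitivity assumption: for every pair of add-remove neighboring
datasets and every output sequence, the query differences realized on the rounds that
output `⊤` sum to at most `Δ`. -/
def ATBoundedSens {X : Type*} (A : List Bool → (Multiset X → ℝ) × ℝ)
    (Δ : ℝ) (L : ℕ) : Prop :=
  ∀ (D : Multiset X) (x : X) (out : Fin L → Bool),
    ∑ i : Fin L,
      (if out i then
        |(A ((List.ofFn out).take i.val)).1 (x ::ₘ D) -
          (A ((List.ofFn out).take i.val)).1 D|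
      else 0) ≤ Δ

/-!
Let `D' = D ∪ {x}`. In a single round, monotonicity makes the outcome `⊥` at most as likely on `D'`
as on `D`, while by the memorylessness of `Exp(lam)` the outcome `⊤` gains at most a factor
`exp (lam * (h D' - h D))`. Only the rounds answering `⊤` are charged, so multiplying over the
rounds gives the one-sided bound with `ε₀ = lam * Δ`.

Given the subsample `T` of `D`, the subsample of `D'` is `T ∪ {x}` with probability `p` and `T`
otherwise. Hence the one-sided bound `e^ε₀` improves to `1 + p * (e^ε₀ - 1)`, and the reverse bound
`1 / (1 - p)` holds for every mechanism. For `p = 1 - e^{-ε}` the reverse bound is exactly `e^ε`,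
and the first is at most `e^ε` as soon as `e^ε₀ ≤ 1 + e^ε`, in particular for `ε₀ = log 2`.
-/

section DiscreteProbability

variable {Ω O : Type*}

theorem toOuterMeasure_bernoulli_bind (q : NNReal) (hq : q ≤ 1) (f : Bool → PMF O) (S : Set O) :
    ((PMF.bernoulli q hq).bind f).toOuterMeasure S =
      q * (f true).toOuterMeasure S + (1 - q) * (f false).toOuterMeasure S := by
  rw [PMF.toOuterMeasure_bind_apply, tsum_fintype, Fintype.sum_bool]
  simp [PMF.bernoulli_apply]

theorem toOuterMeasure_bind_le_mul_s9 (μ : PMF Ω) {f g : Ω → PMF O} {S : Set O} {c : ℝ≥0∞}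
    (h : ∀ a, (f a).toOuterMeasure S ≤ c * (g a).toOuterMeasure S) :
    (μ.bind f).toOuterMeasure S ≤ c * (μ.bind g).toOuterMeasure S := by
  simp only [PMF.toOuterMeasure_bind_apply]
  rw [← ENNReal.tsum_mul_left]
  refine ENNReal.tsum_le_tsum fun a => ?_
  rw [mul_left_comm]
  exact mul_le_mul_right (h a) (μ a)

end DiscreteProbability

section Subsampling

variable {X O : Type*}

theorem subsampleList_perm (p : ℝ≥0∞) (hp : p ≤ 1) {l₁ l₂ : List X} (h : l₁.Perm l₂) :
    subsampleList p hp l₁ = subsampleList p hp l₂ := by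
  induction h with
  | nil => rfl
  | cons x _ ih => simp only [subsampleList, ih]
  | swap x y l =>
    simp only [subsampleList, PMF.bind_bind, PMF.pure_bind]
    rw [PMF.bind_comm]
    congr! 6 with b c s
    cases b <;> cases c <;> simp [Multiset.cons_swap]
  | trans _ _ ih₁ ih₂ => exact ih₁.trans ih₂

theorem subsample_cons (p : ℝ≥0∞) (hp : p ≤ 1) (x : X) (D : Multiset X) :
    subsample p hp (x ::ₘ D) =
      (PMF.bernoulli p.toNNReal
        ((ENNReal.toNNReal_mono ENNReal.one_ne_top hp).trans_eq ENNReal.toNNReal_one)).bind fun b =>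
        (subsample p hp D).bind fun T => PMF.pure (if b then x ::ₘ T else T) := by
  have hperm : (x ::ₘ D).toList.Perm (x :: D.toList) := by
    rw [← Multiset.coe_eq_coe, ← Multiset.cons_coe, Multiset.coe_toList, Multiset.coe_toList]
  rw [subsample, subsampleList_perm p hp hperm, subsampleList, subsample]

variable {p : ℝ}

theorem toOuterMeasure_subsampledMech_cons (M : Multiset X → PMF O) (hp₀ : 0 ≤ p) (hp : p ≤ 1)
    (D : Multiset X) (x : X) (S : Set O) :
    (subsampledMech M p hp (x ::ₘ D)).toOuterMeasure S =
      ENNReal.ofReal p * (subsampledMech (fun T => M (x ::ₘ T)) p hp D).toOuterMeasure S +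
        ENNReal.ofReal (1 - p) * (subsampledMech M p hp D).toOuterMeasure S := by
  rw [subsampledMech, subsample_cons, PMF.bind_bind, toOuterMeasure_bernoulli_bind,
    ENNReal.coe_toNNReal ENNReal.ofReal_ne_top, ENNReal.ofReal_sub 1 hp₀, ENNReal.ofReal_one]
  simp only [PMF.bind_bind, PMF.pure_bind, if_true, Bool.false_eq_true, if_false, subsampledMech]

theorem addDP_subsampledMech {M : Multiset X → PMF O} {ε₀ ε : ℝ} (hM : AddDP M ε₀)
    (hp₀ : 0 ≤ p) (hp : p ≤ 1) (hε : 1 + p * (Real.exp ε₀ - 1) ≤ Real.exp ε) :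
    AddDP (subsampledMech M p hp) ε := by
  intro D x S
  have hcons : (subsampledMech (fun T => M (x ::ₘ T)) p hp D).toOuterMeasure S ≤
      ENNReal.ofReal (Real.exp ε₀) * (subsampledMech M p hp D).toOuterMeasure S :=
    toOuterMeasure_bind_le_mul_s9 _ fun T => hM T x S
  have hcoeff : ENNReal.ofReal p * ENNReal.ofReal (Real.exp ε₀) + ENNReal.ofReal (1 - p) ≤
      ENNReal.ofReal (Real.exp ε) := by
    rw [← ENNReal.ofReal_mul hp₀, ← ENNReal.ofReal_add (by positivity) (sub_nonneg.mpr hp)]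
    exact ENNReal.ofReal_le_ofReal (by linarith)
  rw [toOuterMeasure_subsampledMech_cons M hp₀]
  set P := (subsampledMech M p hp D).toOuterMeasure S
  calc
    _ ≤ ENNReal.ofReal p * (ENNReal.ofReal (Real.exp ε₀) * P) + ENNReal.ofReal (1 - p) * P := by
      gcongr
    _ = (ENNReal.ofReal p * ENNReal.ofReal (Real.exp ε₀) + ENNReal.ofReal (1 - p)) * P := by ring
    _ ≤ ENNReal.ofReal (Real.exp ε) * P := by gcongr

theorem subsampledMech_le_exp_mul_cons (M : Multiset X → PMF O) {ε : ℝ} (hp₀ : 0 ≤ p) (hp : p ≤ 1)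
    (hε : Real.exp (-ε) ≤ 1 - p) (D : Multiset X) (x : X) (S : Set O) :
    (subsampledMech M p hp D).toOuterMeasure S ≤
      ENNReal.ofReal (Real.exp ε) * (subsampledMech M p hp (x ::ₘ D)).toOuterMeasure S := by
  have hcoeff : 1 ≤ ENNReal.ofReal (Real.exp ε) * ENNReal.ofReal (1 - p) := by
    rw [← ENNReal.ofReal_mul (Real.exp_nonneg ε), ENNReal.one_le_ofReal]
    calc
      1 = Real.exp ε * Real.exp (-ε) := by rw [← Real.exp_add, add_neg_cancel, Real.exp_zero]
      _ ≤ Real.exp ε * (1 - p) := by gcongr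
  rw [toOuterMeasure_subsampledMech_cons M hp₀, mul_add, ← mul_assoc _ (ENNReal.ofReal (1 - p))]
  exact (le_mul_of_one_le_left zero_le hcoeff).trans le_add_self

theorem pureDP_subsampledMech {M : Multiset X → PMF O} {ε₀ ε : ℝ} (hM : AddDP M ε₀)
    (hp₀ : 0 ≤ p) (hp : p ≤ 1) (hadd : 1 + p * (Real.exp ε₀ - 1) ≤ Real.exp ε)
    (hremove : Real.exp (-ε) ≤ 1 - p) : PureDP (subsampledMech M p hp) ε := fun D x S =>
  ⟨addDP_subsampledMech hM hp₀ hp hadd D x S, subsampledMech_le_exp_mul_cons M hp₀ hp hremove D x S⟩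

end Subsampling

section ExponentialTail

/-- The tail probability `Pr[θ > t]` of `θ ~ Exp(lam)`, in the closed form used by `repeatedAT`. -/
def expTail (lam t : ℝ) : ℝ≥0∞ :=
  ENNReal.ofReal (Real.exp (-(lam * max t 0)))

variable {lam : ℝ}

theorem expTail_antitone (hlam : 0 ≤ lam) : Antitone (expTail lam) := by
  intro s t hst
  unfold expTail
  gcongr

theorem expTail_le_exp_mul (hlam : 0 ≤ lam) {s t : ℝ} (hst : s ≤ t) :
    expTail lam s ≤ ENNReal.ofReal (Real.exp (lam * (t - s))) * expTail lam t := by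
  have hmax : max t 0 ≤ (t - s) + max s 0 :=
    max_le (by linarith [le_max_left s 0]) (by linarith [le_max_right s 0])
  rw [expTail, expTail, ← ENNReal.ofReal_mul (Real.exp_nonneg _), ← Real.exp_add]
  refine ENNReal.ofReal_le_ofReal (Real.exp_le_exp.mpr ?_)
  linarith [mul_le_mul_of_nonneg_left hmax hlam]

end ExponentialTail

section RepeatedAT

variable {X : Type*} {lam : ℝ} (hlam : 0 ≤ lam) (A : List Bool → (Multiset X → ℝ) × ℝ)

theorem toOuterMeasure_repeatedAT_succ (L : ℕ) (D : Multiset X) (hist : List Bool)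
    (S : Set (List Bool)) :
    (repeatedAT lam hlam A (L + 1) D hist).toOuterMeasure S =
      expTail lam ((A hist).2 - (A hist).1 D) *
          (repeatedAT lam hlam A L D (hist ++ [true])).toOuterMeasure S +
        (1 - expTail lam ((A hist).2 - (A hist).1 D)) *
          (repeatedAT lam hlam A L D (hist ++ [false])).toOuterMeasure S := by
  rw [repeatedAT, toOuterMeasure_bernoulli_bind]
  rfl

/-- The sensitivity realized between `D` and `D'` when the rounds following the history `hist`
output `out`: the total change of the queries over the rounds answering `⊤`. Carrying the history
along makes the sum in `ATBoundedSens` amenable to induction on the number of rounds. -/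
def realizedSens (D D' : Multiset X) (hist : List Bool) {L : ℕ} (out : Fin L → Bool) : ℝ :=
  ∑ i : Fin L,
    if out i then
      |(A (hist ++ (List.ofFn out).take i.val)).1 D' - (A (hist ++ (List.ofFn out).take i.val)).1 D|
    else 0

theorem realizedSens_cons (D D' : Multiset X) (hist : List Bool) {L : ℕ} (b : Bool)
    (out : Fin L → Bool) :
    realizedSens A D D' hist (Fin.cons b out : Fin (L + 1) → Bool) =
      (if b then |(A hist).1 D' - (A hist).1 D| else 0) +
        realizedSens A D D' (hist ++ [b]) out := by
  simp [realizedSens, Fin.sum_univ_succ]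

variable {A}

theorem repeatedAT_le_exp_mul {D D' : Multiset X} (hDD' : ∀ hist, (A hist).1 D ≤ (A hist).1 D')
    (S : Set (List Bool)) {L : ℕ} {hist : List Bool} {B : ℝ}
    (hB : ∀ out : Fin L → Bool, realizedSens A D D' hist out ≤ B) :
    (repeatedAT lam hlam A L D' hist).toOuterMeasure S ≤
      ENNReal.ofReal (Real.exp (lam * B)) * (repeatedAT lam hlam A L D hist).toOuterMeasure S := by
  induction L generalizing hist B with
  | zero =>
    have hB₀ : 0 ≤ B := by simpa [realizedSens] using hB Fin.elim0
    refine le_mul_of_one_le_left zero_le ?_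
    exact ENNReal.one_le_ofReal.mpr (Real.one_le_exp (mul_nonneg hlam hB₀))
  | succ L ih =>
    set gap := (A hist).1 D' - (A hist).1 D with hgap
    have hgap₀ : 0 ≤ gap := sub_nonneg.mpr (hDD' hist)
    have hBtrue (out : Fin L → Bool) : realizedSens A D D' (hist ++ [true]) out ≤ B - gap := by
      have := hB (Fin.cons true out)
      rw [realizedSens_cons, if_pos rfl, ← hgap, abs_of_nonneg hgap₀] at this
      linarith
    have hBfalse (out : Fin L → Bool) : realizedSens A D D' (hist ++ [false]) out ≤ B := by
      simpa [realizedSens_cons] using hB (Fin.cons false out)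
    have hthreshold : (A hist).2 - (A hist).1 D' ≤ (A hist).2 - (A hist).1 D :=
      sub_le_sub_left (hDD' hist) _
    have htail_true := expTail_le_exp_mul hlam hthreshold
    have htail_false := tsub_le_tsub_left (expTail_antitone hlam hthreshold) 1
    have hexp : ENNReal.ofReal (Real.exp (lam * B)) =
        ENNReal.ofReal (Real.exp (lam * gap)) * ENNReal.ofReal (Real.exp (lam * (B - gap))) := by
      rw [← ENNReal.ofReal_mul (Real.exp_nonneg _), ← Real.exp_add, ← mul_add, add_sub_cancel]
    rw [sub_sub_sub_cancel_left, ← hgap] at htail_true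
    rw [toOuterMeasure_repeatedAT_succ, toOuterMeasure_repeatedAT_succ, mul_add]
    refine add_le_add ?_ ?_
    · rw [hexp, mul_mul_mul_comm]
      exact mul_le_mul' htail_true (ih hBtrue)
    · rw [mul_left_comm]
      exact mul_le_mul' htail_false (ih hBfalse)

theorem addDP_repeatedAT {Δ : ℝ} {L : ℕ} (hmono : ATMonotone A) (hsens : ATBoundedSens A Δ L) :
    AddDP (fun D => repeatedAT lam hlam A L D []) (lam * Δ) := fun D x S =>
  repeatedAT_le_exp_mul hlam (fun hist => hmono hist x D) S (hsens D x)

end RepeatedAT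

theorem stmt9_general {X : Type*} {ε Δ lam : ℝ} (hε : 0 ≤ ε) (hlam : 0 ≤ lam)
    (hlamΔ : lam * Δ ≤ Real.log (1 + Real.exp ε)) {L : ℕ}
    {A : List Bool → (Multiset X → ℝ) × ℝ}
    (hmono : ATMonotone A) (hsens : ATBoundedSens A Δ L) :
    PureDP
      (subsampledMech (fun D => repeatedAT lam hlam A L D [])
        (1 - Real.exp (-ε)) (sub_le_self 1 (Real.exp_nonneg _))) ε := by
  have hp₀ : 0 ≤ 1 - Real.exp (-ε) := sub_nonneg.mpr (Real.exp_le_one_iff.mpr (neg_nonpos.mpr hε))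
  refine pureDP_subsampledMech (addDP_repeatedAT hlam hmono hsens) hp₀ _ ?_ (sub_sub_cancel _ _).ge
  have hexp : Real.exp (lam * Δ) - 1 ≤ Real.exp ε :=
    sub_le_iff_le_add'.mpr ((Real.le_log_iff_exp_le (by positivity)).mp hlamΔ)
  calc
    1 + (1 - Real.exp (-ε)) * (Real.exp (lam * Δ) - 1)
    _ ≤ 1 + (1 - Real.exp (-ε)) * Real.exp ε := by gcongr
    _ = Real.exp ε := by
      rw [sub_mul, ← Real.exp_add, neg_add_cancel, Real.exp_zero, one_mul, add_sub_cancel]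

/-- under monotonicity and bounded realized sensitivity (with bound `Δ`),
the subsampled mechanism `Repeated-AT_{ln 2, A}^{S_p}` is `ε`-DP for `p = 1 - e^{-ε}`. -/
theorem stmt9 {X : Type*} (ε Δ : ℝ) (hε : 0 < ε) (hΔ : 0 < Δ) (L : ℕ)
    (A : List Bool → (Multiset X → ℝ) × ℝ)
    (hmono : ATMonotone A) (hsens : ATBoundedSens A Δ L) :
    PureDP
      (subsampledMech
        (fun D => repeatedAT (Real.log 2 / Δ)
          (le_of_lt (div_pos (Real.log_pos one_lt_two) hΔ)) A L D [])
        (1 - Real.exp (-ε)) (sub_le_self 1 (Real.exp_nonneg _))) ε := by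
  refine stmt9_general hε.le _ ?_ hmono hsens
  rw [div_mul_cancel₀ _ hΔ.ne']
  exact Real.log_le_log two_pos (by linarith [Real.one_le_exp hε.le])
end
end

section
/- There exists k₀ ∈ ℕ such that for all k, T ∈ ℕ with k, T ≥ k₀ and T ≥ k, all ε ∈ (0,1), and all finite alphabets 𝒴 with |𝒴| ≥ 5, setting τ*(k) = 0.001·k·log(|𝒴|·T/k), no ε-DP shifting heavy hitters algorithm can, on every input satisfying the contribution assumption with threshold τ*(k) and bound k, achieve error 2·τ*(k) with probability at least 0.5; that is, there is an input satisfying the assumption on which with probability more than 0.5 either some reported element y at some time t has w_t(y) = 0, or some y with w_t(y) ≥ 2·τ*(k) is not reported at time t. -/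
open scoped ENNReal

noncomputable section

/-- `hhWeight D t y` is `w_t(y)`: the number of users (streams) in `D` whose value at
time `t` is `y`. -/
def hhWeight {T : ℕ} {Y : Type*} [DecidableEq Y] (D : Multiset (Fin T → Y))
    (t : Fin T) (y : Y) : ℕ :=
  Multiset.card (D.filter fun s => s t = y)

/-- Contribution assumption with threshold `τ` and bound `k`: every user contributes to
at most `k` `τ`-heavy hitters, i.e. `|{t : w_t(x_{i,t}) > τ}| ≤ k` for each user `i`. -/
def ContribAssump {T : ℕ} {Y : Type*} [DecidableEq Y] (D : Multiset (Fin T → Y))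
    (τ : ℝ) (k : ℕ) : Prop :=
  ∀ s ∈ D, (Finset.univ.filter fun t : Fin T => τ < (hhWeight D t (s t) : ℝ)).card ≤ k

/-!
This is a packing argument over codewords `p : ι → σ × {y // y ∉ A}`.  Time is cut into disjoint
blocks, one per `i : ι`, each made of slots indexed by `σ`; the codeword picks one slot in each
block and a symbol to plant there.  Every user follows the planted symbols, and at all other times
repeats a background symbol from `A`; each background symbol belongs to `r` users.  Planted symbols
thus have weight `r * #A` and must be reported, so the report determines the codeword, whereas at
the other times all weights are at most `r`.  With `#A = 3` and `2 * τ ≤ 3 * r ≤ 3 * τ` every user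
meets at most one `τ`-heavy hitter per block.  The success events of distinct codewords are
disjoint, while by group privacy each of them loses at most a factor `exp (3 * r * ε)` when all
users are removed; there are too many codewords for all of them to succeed with probability
`1 / 2`.
-/

open Finset Function

section Privacy

variable {X O : Type*} {M : Multiset X → PMF O} {ε : ℝ}

lemma PureDP.addDP (hM : PureDP M ε) : AddDP M ε := fun D x S => (hM D x S).1

lemma AddDP.toOuterMeasure_add_le (hM : AddDP M ε) (D E : Multiset X) (S : Set O) :
    (M (D + E)).toOuterMeasure S ≤
      ENNReal.ofReal (Real.exp ε) ^ D.card * (M E).toOuterMeasure S := by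
  induction D using Multiset.induction with
  | empty => simp
  | cons x D ih =>
    rw [Multiset.cons_add, Multiset.card_cons, pow_succ', mul_assoc]
    exact (hM (D + E) x S).trans (by gcongr)

lemma sum_toOuterMeasure_le_one {ι : Type*} [Fintype ι] (P : PMF O) {G : ι → Set O}
    (hG : Pairwise (Disjoint on G)) : ∑ i, P.toOuterMeasure (G i) ≤ 1 := by
  let _ : MeasurableSpace O := ⊤
  simp_rw [← P.toMeasure_apply_eq_toOuterMeasure]
  exact (MeasureTheory.sum_measure_le_measure_univ
    (fun _ _ => MeasurableSpace.measurableSet_top.nullMeasurableSet)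
    fun _ _ _ _ hij => (hG hij).aedisjoint).trans MeasureTheory.prob_le_one

lemma AddDP.exists_toOuterMeasure_lt {ι : Type*} [Fintype ι] (hM : AddDP M ε)
    {D : ι → Multiset X} {n : ℕ} (hD : ∀ i, (D i).card = n) {G : ι → Set O}
    (hG : Pairwise (Disjoint on G)) {β : ℝ} (hβ : Real.exp ε ^ n < Fintype.card ι * β) :
    ∃ i, (M (D i)).toOuterMeasure (G i) < ENNReal.ofReal β := by
  by_contra! hlarge
  have hempty (i : ι) : ENNReal.ofReal β ≤
      ENNReal.ofReal (Real.exp ε) ^ n * (M 0).toOuterMeasure (G i) := by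
    have hremove := hM.toOuterMeasure_add_le (D i) 0 (G i)
    rw [add_zero, hD] at hremove
    exact (hlarge i).trans hremove
  have hpack : ENNReal.ofReal (Fintype.card ι * β) ≤ ENNReal.ofReal (Real.exp ε ^ n) := calc
    ENNReal.ofReal (Fintype.card ι * β) = ∑ _i : ι, ENNReal.ofReal β := by
      simp [ENNReal.ofReal_mul]
    _ ≤ ∑ i, ENNReal.ofReal (Real.exp ε) ^ n * (M 0).toOuterMeasure (G i) :=
      sum_le_sum fun i _ => hempty i
    _ = ENNReal.ofReal (Real.exp ε) ^ n * ∑ i, (M 0).toOuterMeasure (G i) := by rw [mul_sum]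
    _ ≤ ENNReal.ofReal (Real.exp ε) ^ n * 1 := by
      gcongr
      exact sum_toOuterMeasure_le_one _ hG
    _ = ENNReal.ofReal (Real.exp ε ^ n) := by
      rw [mul_one, ENNReal.ofReal_pow (Real.exp_pos ε).le]
  exact hpack.not_gt ((ENNReal.ofReal_lt_ofReal_iff_of_nonneg (by positivity)).2 hβ)

end Privacy

section Planting

variable {T r : ℕ} {Y ι σ : Type*} {A : Finset Y} {e : ι × σ ↪ Fin T}
  {p : ι → σ × {y // y ∉ A}}

/-- The time at which the codeword `p` plants a symbol in block `i`; the embedding `e` places slot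
`j` of block `i` at time `e (i, j)`. -/
def plantTime (e : ι × σ ↪ Fin T) (p : ι → σ × {y // y ∉ A}) (i : ι) : Fin T := e (i, (p i).1)

/-- The stream that follows the codeword `p` at its planting times and is constantly `a` at all
other times. -/
def plantedStream (e : ι × σ ↪ Fin T) (p : ι → σ × {y // y ∉ A}) (a : Y) : Fin T → Y :=
  extend (plantTime e p) (fun i => (p i).2) (const (Fin T) a)

/-- The dataset encoding the codeword `p`: for every `a ∈ A`, it has `r` users whose stream is the
planted stream with background symbol `a`. -/
def plantedData (r : ℕ) (e : ι × σ ↪ Fin T) (p : ι → σ × {y // y ∉ A}) : Multiset (Fin T → Y) :=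
  r • A.val.map (plantedStream e p)

lemma plantTime_injective : Injective (plantTime e p) := fun _ _ h =>
  congrArg Prod.fst (e.injective h)

lemma plantedStream_plantTime (a : Y) (i : ι) : plantedStream e p a (plantTime e p i) = (p i).2 :=
  plantTime_injective.extend_apply _ _ i

lemma plantedStream_of_notMem_range (a : Y) {t : Fin T} (ht : t ∉ Set.range (plantTime e p)) :
    plantedStream e p a t = a :=
  extend_apply' _ _ t ht

lemma card_plantedData : (plantedData r e p).card = r * #A := by
  simp [plantedData]

lemma exists_of_mem_plantedData {s : Fin T → Y} (hs : s ∈ plantedData r e p) :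
    ∃ a ∈ A, plantedStream e p a = s :=
  Multiset.mem_map.1 (Multiset.mem_of_mem_nsmul hs)

variable [DecidableEq Y]

/-- The event that a sequence of reports `R` has error `θ` on the dataset `D`: only symbols that
occur are reported, and all symbols of weight at least `θ` are. -/
def successEvent (D : Multiset (Fin T → Y)) (θ : ℝ) : Set (Fin T → Finset Y) :=
  {R | ∀ t, (∀ y ∈ R t, 0 < hhWeight D t y) ∧ ∀ y, θ ≤ (hhWeight D t y : ℝ) → y ∈ R t}

lemma hhWeight_pos {D : Multiset (Fin T → Y)} {t : Fin T} {y : Y} :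
    0 < hhWeight D t y ↔ ∃ s ∈ D, s t = y := by
  simp [hhWeight, Multiset.card_pos_iff_exists_mem]

lemma hhWeight_nsmul_map (f : Y → Fin T → Y) (t : Fin T) (y : Y) :
    hhWeight (r • A.val.map f) t y = r * #{a ∈ A | f a t = y} := by
  simp [hhWeight, Multiset.filter_nsmul, Multiset.filter_map, card_def]

lemma hhWeight_plantedData_plantTime (i : ι) :
    hhWeight (plantedData r e p) (plantTime e p i) (p i).2 = r * #A := by
  simp [plantedData, hhWeight_nsmul_map, plantedStream_plantTime]

lemma hhWeight_plantedData_le {t : Fin T} (ht : t ∉ Set.range (plantTime e p)) (y : Y) :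
    hhWeight (plantedData r e p) t y ≤ r := by
  have hcard : #{a ∈ A | a = y} ≤ 1 := by
    rw [filter_eq']
    split_ifs <;> simp
  simpa [plantedData, hhWeight_nsmul_map, plantedStream_of_notMem_range _ ht] using
    Nat.mul_le_mul_left r hcard

lemma exists_plantTime_of_hhWeight_pos {t : Fin T} {y : Y} (hy : y ∉ A)
    (hpos : 0 < hhWeight (plantedData r e p) t y) : ∃ i, plantTime e p i = t ∧ (p i).2 = y := by
  obtain ⟨s, hs, rfl⟩ := hhWeight_pos.1 hpos
  obtain ⟨a, ha, rfl⟩ := exists_of_mem_plantedData hs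
  by_cases ht : t ∈ Set.range (plantTime e p)
  · obtain ⟨i, rfl⟩ := ht
    exact ⟨i, rfl, (plantedStream_plantTime a i).symm⟩
  · exact absurd (by rwa [plantedStream_of_notMem_range a ht]) hy

lemma contribAssump_plantedData [Fintype ι] {τ : ℝ} (hr : r ≤ τ) :
    ContribAssump (plantedData r e p) τ (Fintype.card ι) := by
  intro s _
  have hheavy : ({t | τ < (hhWeight (plantedData r e p) t (s t) : ℝ)} : Finset (Fin T)) ⊆
      univ.image (plantTime e p) := by
    intro t ht
    by_contra hnot
    have hle : hhWeight (plantedData r e p) t (s t) ≤ r :=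
      hhWeight_plantedData_le (by simpa using hnot) _
    exact (mem_filter.1 ht).2.not_ge ((Nat.cast_le.2 hle).trans hr)
  exact (card_le_card hheavy).trans card_image_le

lemma pairwise_disjoint_successEvent_plantedData {θ : ℝ} (hθ : θ ≤ r * #A) :
    Pairwise (Disjoint on fun p : ι → σ × {y // y ∉ A} =>
      successEvent (plantedData r e p) θ) := by
  intro p q hpq
  refine Set.disjoint_left.2 fun R hp hq => hpq (funext fun i => ?_)
  have hreport : (p i).2.1 ∈ R (plantTime e p i) :=
    (hp _).2 _ (by rw [hhWeight_plantedData_plantTime]; exact_mod_cast hθ)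
  obtain ⟨j, htime, hsymbol⟩ :=
    exists_plantTime_of_hhWeight_pos (p i).2.2 ((hq _).1 _ hreport)
  obtain ⟨rfl, hslot⟩ : j = i ∧ (q j).1 = (p i).1 := Prod.ext_iff.1 (e.injective htime)
  exact (Prod.ext hslot (Subtype.ext hsymbol)).symm

lemma AddDP.exists_contribAssump_successEvent_lt [Fintype Y] [Fintype ι] [Fintype σ]
    {M : Multiset (Fin T → Y) → PMF (Fin T → Finset Y)} {ε : ℝ} (hM : AddDP M ε) (A : Finset Y)
    (e : ι × σ ↪ Fin T) {τ θ β : ℝ} (hτ : r ≤ τ) (hθ : θ ≤ r * #A)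
    (hβ : Real.exp ε ^ (r * #A) < ((Fintype.card σ * #Aᶜ : ℕ) : ℝ) ^ Fintype.card ι * β) :
    ∃ D, ContribAssump D τ (Fintype.card ι) ∧
      (M D).toOuterMeasure (successEvent D θ) < ENNReal.ofReal β := by
  classical
  have hcard : Fintype.card (ι → σ × {y // y ∉ A}) =
      (Fintype.card σ * #Aᶜ) ^ Fintype.card ι := by
    simp [Fintype.card_subtype_compl, card_compl]
  obtain ⟨p, hp⟩ := hM.exists_toOuterMeasure_lt (D := plantedData r e)
    (fun _ => card_plantedData) (pairwise_disjoint_successEvent_plantedData hθ)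
    (by rw [hcard]; exact_mod_cast hβ)
  exact ⟨plantedData r e p, contribAssump_plantedData hτ, hp⟩

end Planting

section Estimates

lemma two_le_natDiv_mul_sub_three {k T n : ℕ} (hk : 0 < k) (hkT : k ≤ T) (hn : 5 ≤ n) :
    2 ≤ T / k * (n - 3) := calc
  2 ≤ n - 3 := by omega
  _ ≤ T / k * (n - 3) := Nat.le_mul_of_pos_left _ (Nat.div_pos hkT hk)

lemma mul_div_le_natDiv_mul_pow_four {k T n : ℕ} (hk : 0 < k) (hkT : k ≤ T) (hn : 5 ≤ n) :
    (n * T / k : ℝ) ≤ ((T / k * (n - 3) : ℕ) : ℝ) ^ 4 := by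
  set z := T / k * (n - 3) with hz
  have hquot : 0 < T / k := Nat.div_pos hkT hk
  have hz2 : 2 ≤ z := two_le_natDiv_mul_sub_three hk hkT hn
  have hT : T ≤ 2 * (T / k) * k := by
    nlinarith [Nat.div_add_mod T k, Nat.mod_lt T hk]
  have hlin : n * T ≤ 5 * z * k := calc
    n * T ≤ n * (2 * (T / k) * k) := by gcongr
    _ = 2 * n * (T / k * k) := by ring
    _ ≤ 5 * (n - 3) * (T / k * k) := by gcongr ?_ * _; omega
    _ = 5 * z * k := by rw [hz]; ring
  have hpow : 5 * z ≤ z ^ 4 := calc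
    5 * z ≤ 2 ^ 3 * z := by omega
    _ ≤ z ^ 3 * z := by gcongr
    _ = z ^ 4 := by ring
  rw [div_le_iff₀ (by positivity)]
  exact_mod_cast hlin.trans (Nat.mul_le_mul_right k hpow)

lemma exp_pow_lt_pow_mul_half {k n : ℕ} (hk : 4000 ≤ k) {ε x z : ℝ} (hε : ε ≤ 100) (hx : 0 < x)
    (hz : 2 ≤ z) (hxz : x ≤ z ^ 4) (hn : n ≤ 2 * (0.001 * k * Real.log x) + 3) :
    Real.exp ε ^ n < z ^ k * (1 / 2) := by
  have hk' : (4000 : ℝ) ≤ k := by exact_mod_cast hk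
  have hlogz : Real.log 2 ≤ Real.log z := Real.log_le_log two_pos hz
  have hlogx : Real.log x ≤ 4 * Real.log z := by
    simpa using Real.log_le_log hx hxz
  have hkx : k * Real.log x ≤ k * (4 * Real.log z) := by gcongr
  have hkz : 4000 * Real.log 2 ≤ k * Real.log z := by gcongr
  -- The coefficient of `k * log z` on the left is at most `100 * 0.002 * 4 = 0.8`; the remaining
  -- `0.2 * k * log z` absorbs the additive terms.
  have hexponent : n * ε < k * Real.log z - Real.log 2 := calc
    n * ε ≤ n * 100 := by gcongr
    _ < k * Real.log z - Real.log 2 := by linarith [Real.log_two_gt_d9, Real.log_two_lt_d9]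
  calc Real.exp ε ^ n = Real.exp (n * ε) := (Real.exp_nat_mul ε n).symm
    _ < Real.exp (k * Real.log z - Real.log 2) := Real.exp_lt_exp.2 hexponent
    _ = z ^ k * (1 / 2) := by
      rw [Real.exp_sub, Real.exp_log two_pos, Real.exp_nat_mul, Real.exp_log (by linarith)]
      ring

lemma three_le_mul_log {k : ℕ} (hk : 4000 ≤ k) {x : ℝ} (hx : 5 ≤ x) :
    3 ≤ 0.001 * k * Real.log x := by
  have hk' : (4000 : ℝ) ≤ k := by exact_mod_cast hk
  have hlog : 1 ≤ Real.log x := by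
    rw [Real.le_log_iff_exp_le (by linarith)]
    linarith [Real.exp_one_lt_d9]
  nlinarith

lemma exists_nat_two_mul_le_three_mul {τ : ℝ} (hτ : 3 ≤ τ) :
    ∃ r : ℕ, (r : ℝ) ≤ τ ∧ 2 * τ ≤ r * 3 ∧ (r * 3 : ℝ) ≤ 2 * τ + 3 := by
  have hlower := Nat.le_ceil (2 * τ / 3)
  have hupper := Nat.ceil_lt_add_one (a := 2 * τ / 3) (by linarith)
  exact ⟨⌈2 * τ / 3⌉₊, by linarith, by linarith, by linarith⟩

end Estimates

theorem stmt11_general {k T : ℕ} (hk : 4000 ≤ k) (hkT : k ≤ T) {ε : ℝ} (hε : ε ≤ 100)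
    {Y : Type*} [Fintype Y] [DecidableEq Y] (hY : 5 ≤ Fintype.card Y)
    {M : Multiset (Fin T → Y) → PMF (Fin T → Finset Y)} (hM : AddDP M ε) :
    ∃ D : Multiset (Fin T → Y),
      ContribAssump D (0.001 * k * Real.log (Fintype.card Y * T / k)) k ∧
      (M D).toOuterMeasure
        (successEvent D (2 * (0.001 * k * Real.log (Fintype.card Y * T / k)))) < 1 / 2 := by
  have hk0 : 0 < k := by omega
  have hx : (5 : ℝ) ≤ Fintype.card Y * T / k := by
    rw [le_div_iff₀ (by positivity)]
    exact_mod_cast Nat.mul_le_mul hY hkT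
  obtain ⟨r, hrτ, hr_lower, hr_upper⟩ := exists_nat_two_mul_le_three_mul (three_le_mul_log hk hx)
  obtain ⟨A, -, hA⟩ := exists_subset_card_eq (s := (univ : Finset Y)) (n := 3)
    (by rw [card_univ]; omega)
  have hmany : Real.exp ε ^ (r * 3) <
      ((T / k * (Fintype.card Y - 3) : ℕ) : ℝ) ^ k * (1 / 2) :=
    exp_pow_lt_pow_mul_half hk hε (by linarith)
      (by exact_mod_cast two_le_natDiv_mul_sub_three hk0 hkT hY)
      (mul_div_le_natDiv_mul_pow_four hk0 hkT hY) (by exact_mod_cast hr_upper)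
  have hhalf : ENNReal.ofReal (1 / 2) = 1 / 2 := by simp [ENNReal.ofReal_inv_of_pos]
  let slots : Fin k × Fin (T / k) ↪ Fin T :=
    finProdFinEquiv.toEmbedding.trans (Fin.castLEEmb (Nat.mul_div_le T k))
  simpa only [Fintype.card_fin, hhalf] using
    hM.exists_contribAssump_successEvent_lt A slots (β := 1 / 2) hrτ
      (by simpa [hA] using hr_lower) (by simpa [hA, card_compl] using hmany)

/-- lower bound for shifting heavy hitters.  For all sufficiently large
`k ≤ T`, `ε ∈ (0,1)` and alphabets with `|Y| ≥ 5`, no `ε`-DP algorithm achieves error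
`2 τ*(k)` with probability `1/2` on every input satisfying the contribution assumption
with threshold `τ*(k) = 0.001 k log(|Y| T / k)` and bound `k`: some input satisfying the
assumption has success probability below `1/2`. -/
theorem stmt11 :
    ∃ k₀ : ℕ, ∀ (k T : ℕ), k₀ ≤ k → k₀ ≤ T → k ≤ T →
      ∀ ε : ℝ, 0 < ε → ε < 1 →
      ∀ (Y : Type) [Fintype Y] [DecidableEq Y], 5 ≤ Fintype.card Y →
      ∀ M : Multiset (Fin T → Y) → PMF (Fin T → Finset Y), PureDP M ε →
      ∃ D : Multiset (Fin T → Y),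
        ContribAssump D (0.001 * k * Real.log (Fintype.card Y * T / k)) k ∧
        (M D).toOuterMeasure
            {R : Fin T → Finset Y | ∀ t : Fin T,
              (∀ y ∈ R t, 0 < hhWeight D t y) ∧
              (∀ y : Y,
                2 * (0.001 * k * Real.log (Fintype.card Y * T / k)) ≤
                  (hhWeight D t y : ℝ) → y ∈ R t)} < 1 / 2 := by
  exact ⟨4000, fun k T hk _ hkT ε _ hε Y _ _ hY M hM =>
    stmt11_general hk hkT (by linarith) hY hM.addDP⟩
end
end

section
/- For every ε₀ > 0, every L ∈ ℕ, and every ε' < L·ε₀, there exists an adaptive selector A satisfying the Monotonicity assumption and the Bounded realized sensitivity assumption with Δ = 1 such that the mechanism Repeated-EM_{ε₀,A} is not ε'-DP. -/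
open scoped ENNReal

noncomputable section

/-!
A selector over two candidates `a` and `b` gives `a` a constant score `s`, and lets the score of
`b` jump by `Δ` when the dataset becomes nonempty, but only as long as every earlier output was `a`.
An output sequence is thus charged at most once, at its first departure from `a`. The sequence
`a, …, a` is never charged, and yet its probability drops in every round when an element is added:
with `lam = ε₀ / Δ` and `w = exp (lam * s)`, each factor goes from `w / (w + 1)` to
`w / (w + exp (lam * Δ))`. As `s → -∞` the ratio of these factors tends to `exp (lam * Δ)`, so the
loss over `L` rounds comes arbitrarily close to `L * (lam * Δ) = L * ε₀`.
-/

theorem PureDP.apply_le {X O : Type*} {M : Multiset X → PMF O} {ε : ℝ} (hM : PureDP M ε)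
    (D : Multiset X) (x : X) (o : O) :
    M D o ≤ ENNReal.ofReal (Real.exp ε) * M (x ::ₘ D) o := by
  simpa only [PMF.toOuterMeasure_apply_singleton] using (hM D x {o}).2

section Mechanisms

variable {X C : Type*}

theorem expMech_apply_of_mem (lam : ℝ) {Cs : Finset C} (hCs : Cs.Nonempty) (q : C → ℝ) {c : C}
    (hc : c ∈ Cs) :
    expMech lam Cs hCs q c =
      ENNReal.ofReal (Real.exp (lam * q c) / ∑ c' ∈ Cs, Real.exp (lam * q c')) := by
  have hZ : 0 < ∑ c' ∈ Cs, Real.exp (lam * q c') :=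
    Finset.sum_pos (fun _ _ => Real.exp_pos _) hCs
  rw [expMech, PMF.ofFinset_apply, if_pos hc, ENNReal.ofReal_div_of_pos hZ,
    ENNReal.ofReal_sum_of_nonneg fun _ _ => (Real.exp_pos _).le]

variable (lam : ℝ) (A : List C → Finset C × (C → Multiset X → ℝ)) (hA : ∀ h, (A h).1.Nonempty)
  (D : Multiset X)

theorem isPrefix_of_mem_support_repeatedEM {L : ℕ} {h out : List C}
    (hout : out ∈ (repeatedEM lam A hA L D h).support) : h <+: out := by
  induction L generalizing h with
  | zero =>
    rw [repeatedEM, PMF.mem_support_pure_iff] at hout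
    rw [hout]
  | succ L ih =>
    rw [repeatedEM, PMF.mem_support_bind_iff] at hout
    obtain ⟨c, -, hc⟩ := hout
    exact (List.prefix_append h [c]).trans (ih hc)

theorem repeatedEM_succ_append_cons (L : ℕ) (h : List C) (c : C) (l : List C) :
    repeatedEM lam A hA (L + 1) D h (h ++ c :: l) =
      expMech lam (A h).1 (hA h) (fun c => (A h).2 c D) c *
        repeatedEM lam A hA L D (h ++ [c]) (h ++ c :: l) := by
  rw [repeatedEM, PMF.bind_apply, tsum_eq_single c]
  intro c' hc'
  have hne : ¬ h ++ [c'] <+: h ++ c :: l := by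
    simpa only [List.prefix_append_right_inj, List.cons_prefix_cons, List.nil_prefix,
      and_true] using hc'
  have hzero : repeatedEM lam A hA L D (h ++ [c']) (h ++ c :: l) = 0 :=
    (PMF.apply_eq_zero_iff _ _).2 (mt (isPrefix_of_mem_support_repeatedEM lam A hA D) hne)
  rw [hzero, mul_zero]

theorem repeatedEM_replicate {a : C} {p : ℝ≥0∞}
    (hp : ∀ k, expMech lam (A (List.replicate k a)).1 (hA _)
      (fun c => (A (List.replicate k a)).2 c D) a = p) (L k : ℕ) :
    repeatedEM lam A hA L D (List.replicate k a) (List.replicate k a ++ List.replicate L a) =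
      p ^ L := by
  induction L generalizing k with
  | zero => simp [repeatedEM]
  | succ L ih =>
    rw [List.replicate_succ, repeatedEM_succ_append_cons, hp, ← List.replicate_succ',
      List.append_cons, ← List.replicate_succ', ih, pow_succ']

end Mechanisms

theorem forall_mem_take_ofFn {α : Type*} {L : ℕ} {f : Fin L → α} {i : Fin L} {p : α → Prop} :
    (∀ y ∈ (List.ofFn f).take i, p y) ↔ ∀ j < i, p (f j) := by
  simp only [List.mem_take_iff_getElem, List.length_ofFn, lt_min_iff, List.getElem_ofFn]
  exact ⟨fun h j hj => h _ ⟨j, ⟨hj, j.2⟩, rfl⟩, by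
    rintro h _ ⟨j, ⟨hji, hjL⟩, rfl⟩
    exact h ⟨j, hjL⟩ hji⟩

open Classical in
theorem sum_ite_isLeast_le {ι : Type*} [Fintype ι] [PartialOrder ι] (S : Set ι) {r : ℝ}
    (hr : 0 ≤ r) : ∑ i, (if IsLeast S i then r else 0) ≤ r := by
  have hcard : (Finset.univ.filter (IsLeast S)).card ≤ 1 :=
    Finset.card_le_one.2 fun i hi j hj =>
      (Finset.mem_filter.1 hi).2.unique (Finset.mem_filter.1 hj).2
  rw [← Finset.sum_filter, Finset.sum_const]
  simpa only [one_nsmul] using nsmul_le_nsmul_left hr hcard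

section GatedSelector

variable {X C : Type*}

open Classical in
/-- The score of the lower-bound construction: the reference candidate `a` always scores `s`, and
every other candidate scores `Δ` on nonempty datasets while the history consists of copies
of `a`, and `0` otherwise. -/
def gatedScore (a : C) (s Δ : ℝ) (h : List C) (c : C) (D : Multiset X) : ℝ :=
  if c = a then s else if D ≠ 0 ∧ ∀ y ∈ h, y = a then Δ else 0

open Classical in
/-- The adaptive selector of the lower-bound construction: in every round it offers the candidates
`a` and `b`, scored by `gatedScore`. -/
def gatedSelector (a b : C) (s Δ : ℝ) (h : List C) : Finset C × (C → Multiset X → ℝ) :=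
  ({a, b}, gatedScore a s Δ h)

theorem gatedSelector_nonempty (a b : C) (s Δ : ℝ) (h : List C) :
    (gatedSelector (X := X) a b s Δ h).1.Nonempty :=
  ⟨a, by simp [gatedSelector]⟩

open Classical in
theorem gatedScore_cons_sub (a : C) (s Δ : ℝ) (h : List C) (c : C) (x : X) (D : Multiset X) :
    gatedScore a s Δ h c (x ::ₘ D) - gatedScore a s Δ h c D =
      if (c ≠ a ∧ ∀ y ∈ h, y = a) ∧ D = 0 then Δ else 0 := by
  by_cases hc : c = a <;> by_cases hD : D = 0 <;> simp [gatedScore, hc, hD]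

theorem emMonotone_gatedSelector (a b : C) (s : ℝ) {Δ : ℝ} (hΔ : 0 ≤ Δ) :
    EMMonotone (gatedSelector (X := X) a b s Δ) := by
  intro h c x D
  rw [← sub_nonneg]
  refine le_of_le_of_eq ?_ (gatedScore_cons_sub a s Δ h c x D).symm
  split_ifs <;> simp [hΔ]

theorem isLeast_setOf_ne_iff {L : ℕ} {out : Fin L → C} {a : C} {i : Fin L} :
    IsLeast {j | out j ≠ a} i ↔ out i ≠ a ∧ ∀ y ∈ (List.ofFn out).take i, y = a := by
  rw [forall_mem_take_ofFn]
  exact and_congr_right fun _ => forall_congr' fun j => by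
    rw [← not_imp_not, not_le, Set.mem_ofPred_eq, not_not]

theorem emBoundedSens_gatedSelector (a b : C) (s : ℝ) {Δ : ℝ} (hΔ : 0 ≤ Δ) (L : ℕ) :
    EMBoundedSens (gatedSelector (X := X) a b s Δ) Δ L := by
  classical
  intro D x out _
  refine le_trans (Finset.sum_le_sum fun i _ => ?_) (sum_ite_isLeast_le {j | out j ≠ a} hΔ)
  simp only [gatedSelector, gatedScore_cons_sub, isLeast_setOf_ne_iff, ite_and _ (D = 0)]
  split_ifs <;> simp [abs_of_nonneg hΔ, hΔ]

open Classical in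
theorem repeatedEM_gatedSelector_replicate (lam : ℝ) {a b : C} (hab : a ≠ b) (s Δ : ℝ) (L : ℕ)
    (D : Multiset X) :
    repeatedEM lam (gatedSelector a b s Δ) (gatedSelector_nonempty a b s Δ) L D []
        (List.replicate L a) =
      ENNReal.ofReal ((Real.exp (lam * s) /
        (Real.exp (lam * s) + if D = 0 then 1 else Real.exp (lam * Δ))) ^ L) := by
  rw [ENNReal.ofReal_pow (by positivity)]
  refine repeatedEM_replicate lam _ _ D (fun k => ?_) L 0
  rw [expMech_apply_of_mem _ _ _ (by simp [gatedSelector])]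
  by_cases hD : D = 0 <;>
    simp [gatedSelector, gatedScore, Finset.sum_pair hab, hab.symm, hD]

end GatedSelector

open Filter Topology in
theorem exists_exp_mul_pow_div_lt {lam : ℝ} (hlam : 0 < lam) {Δ ε : ℝ} {L : ℕ}
    (hε : ε < L * (lam * Δ)) :
    ∃ s, Real.exp ε * (Real.exp (lam * s) / (Real.exp (lam * s) + Real.exp (lam * Δ))) ^ L <
      (Real.exp (lam * s) / (Real.exp (lam * s) + 1)) ^ L := by
  have hweight : Tendsto (fun s => Real.exp (lam * s)) atBot (𝓝 0) :=
    Real.tendsto_exp_atBot.comp (tendsto_id.const_mul_atBot hlam)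
  have hratio : Tendsto (fun s => ((Real.exp (lam * s) + Real.exp (lam * Δ)) /
      (Real.exp (lam * s) + 1)) ^ L) atBot (𝓝 (Real.exp (L * (lam * Δ)))) := by
    simpa [Real.exp_nat_mul] using
      ((hweight.add_const (Real.exp (lam * Δ))).div (hweight.add_const 1) (by simp)).pow L
  obtain ⟨s, hs⟩ := (hratio.eventually_const_lt (Real.exp_lt_exp.2 hε)).exists
  refine ⟨s, ?_⟩
  calc _ < ((Real.exp (lam * s) + Real.exp (lam * Δ)) / (Real.exp (lam * s) + 1)) ^ L *
        (Real.exp (lam * s) / (Real.exp (lam * s) + Real.exp (lam * Δ))) ^ L :=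
        mul_lt_mul_of_pos_right hs (by positivity)
    _ = (Real.exp (lam * s) / (Real.exp (lam * s) + 1)) ^ L := by
        rw [← mul_pow, div_mul_div_cancel₀' (by positivity)]

theorem stmt12_general {X C : Type*} [Nonempty X] [Nontrivial C] {ε₀ Δ : ℝ} (hε₀ : 0 < ε₀)
    (hΔ : 0 < Δ) {L : ℕ} {ε' : ℝ} (hε' : ε' < L * ε₀) :
    ∃ (A : List C → Finset C × (C → Multiset X → ℝ)) (hA : ∀ h, (A h).1.Nonempty),
      EMMonotone A ∧ EMBoundedSens A Δ L ∧
      ¬ PureDP (fun D => repeatedEM (ε₀ / Δ) A hA L D []) ε' := by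
  obtain ⟨a, b, hab⟩ := exists_pair_ne C
  obtain ⟨x⟩ := ‹Nonempty X›
  obtain ⟨s, hs⟩ := exists_exp_mul_pow_div_lt (lam := ε₀ / Δ) (Δ := Δ) (div_pos hε₀ hΔ)
    (by rwa [div_mul_cancel₀ _ hΔ.ne'])
  refine ⟨gatedSelector a b s Δ, gatedSelector_nonempty a b s Δ,
    emMonotone_gatedSelector a b s hΔ.le, emBoundedSens_gatedSelector a b s hΔ.le L,
    fun hDP => hs.not_ge ?_⟩
  have hle := hDP.apply_le 0 x (List.replicate L a)
  simp only [repeatedEM_gatedSelector_replicate _ hab, if_true, Multiset.cons_ne_zero,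
    if_false] at hle
  rwa [← ENNReal.ofReal_mul (Real.exp_pos _).le,
    ENNReal.ofReal_le_ofReal_iff (by positivity)] at hle

/-- for every `ε₀ > 0`, `L`, and `ε' < L·ε₀`, there is an adaptive selector
satisfying monotonicity and bounded realized sensitivity with `Δ = 1` such that
`Repeated-EM_{ε₀, A}` (run for `L` rounds) is not `ε'`-DP. -/
theorem stmt12 (ε₀ : ℝ) (hε₀ : 0 < ε₀) (L : ℕ) (ε' : ℝ) (hε' : ε' < L * ε₀) :
    ∃ (A : List ℕ → Finset ℕ × (ℕ → Multiset ℕ → ℝ)) (hA : ∀ h, (A h).1.Nonempty),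
      EMMonotone A ∧ EMBoundedSens A 1 L ∧
      ¬ PureDP (fun D => repeatedEM (ε₀ / 1) A hA L D []) ε' :=
  stmt12_general hε₀ one_pos hε'
end
end
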